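/- Let X, B, Y be Banach spaces, let i : X → B be a compact bounded linear operator and let j : B → Y be an injective bounded linear operator. Let 1 ≤ p < ∞ and 0 < T < ∞, and let F be a family of strongly measurable functions f : (0,T) → X such that (i) the set {f : f ∈ F} is bounded in L^p(0,T;X), and (ii) sup_{f ∈ F} ‖(j∘i∘f)(·+h) − (j∘i∘f)(·)‖_{L^p(0,T−h;Y)} → 0 as h → 0⁺. Then the set {i∘f : f ∈ F} is relatively compact in L^p(0,T;B). -/

import Mathlib

open MeasureTheory ENNReal

/-!
Ehrling's inequality `‖i x‖ ≤ η ‖x‖ + C ‖j (i x)‖` lets the `Lᵖ(X)` bound trade the smallness of the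
translates of `j ∘ i ∘ f` in `Y` for the smallness of those of `i ∘ f` in `B`. Averaged over the
translation length, small translates say that on each cell of a fine uniform grid `i ∘ f` is on
average close to its own values `i (f s)` there. Choosing a good sample point `s` in each cell, with
`‖f s‖` also controlled, gives step functions close to `i ∘ f` whose values lie in the image under
`i` of a fixed ball. These images are relatively compact, so the step functions on a given grid form
a totally bounded subset of `Lᵖ(B)`.
-/

section TotallyBounded

theorem totallyBounded_of_forall_exists_totallyBounded {α : Type*} [PseudoEMetricSpace α]
    {S : Set α} (h : ∀ ε : ℝ≥0∞, ε ≠ 0 → ε ≠ ⊤ →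
      ∃ K : Set α, TotallyBounded K ∧ ∀ x ∈ S, ∃ y ∈ K, edist x y ≤ ε) :
    TotallyBounded S := by
  refine EMetric.totallyBounded_iff.2 fun ε hε => ?_
  have hδ : min ε 1 / 2 ≠ 0 := by simp [hε.ne']
  have hδ_top : min ε 1 / 2 ≠ ⊤ :=
    ENNReal.div_ne_top (min_lt_of_right_lt one_lt_top).ne two_ne_zero
  obtain ⟨K, hK, hSK⟩ := h (min ε 1 / 2) hδ hδ_top
  obtain ⟨t, ht, hKt⟩ := EMetric.totallyBounded_iff.1 hK _ (pos_iff_ne_zero.2 hδ)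
  refine ⟨t, ht, fun x hx => ?_⟩
  obtain ⟨y, hy, hxy⟩ := hSK x hx
  obtain ⟨z, hz, hyz⟩ := Set.mem_iUnion₂.1 (hKt hy)
  refine Set.mem_iUnion₂.2 ⟨z, hz, ?_⟩
  calc edist x z ≤ edist x y + edist y z := edist_triangle x y z
    _ < min ε 1 / 2 + min ε 1 / 2 :=
      ENNReal.add_lt_add_of_le_of_lt (ne_top_of_le_ne_top hδ_top hxy) hxy hyz
    _ = min ε 1 := ENNReal.add_halves _
    _ ≤ ε := min_le_left ε 1

end TotallyBounded

section Ehrling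

open scoped NNReal

variable {𝕜 X B Y : Type*} [NontriviallyNormedField 𝕜]
  [NormedAddCommGroup X] [NormedSpace 𝕜 X] [NormedAddCommGroup B] [NormedSpace 𝕜 B]
  [NormedAddCommGroup Y] [NormedSpace 𝕜 Y]

theorem exists_pos_forall_le_norm_of_isCompact {K : Set B} (hK : IsCompact K)
    {j : B →L[𝕜] Y} (hj : Function.Injective j) {η : ℝ} (hη : 0 < η) :
    ∃ m > 0, ∀ b ∈ K, η ≤ ‖b‖ → m ≤ ‖j b‖ := by
  have hKη : IsCompact (K ∩ {b | η ≤ ‖b‖}) :=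
    hK.inter_right (isClosed_le continuous_const continuous_norm)
  obtain ⟨m, hm, hmK⟩ := hKη.exists_forall_le' (f := fun b => ‖j b‖) (a := 0) (by fun_prop)
    fun b hb => norm_pos_iff.2 fun h0 =>
      norm_pos_iff.1 (hη.trans_le hb.2) (hj (h0.trans (map_zero j).symm))
  exact ⟨m, hm, fun b hbK hb => hmK b ⟨hbK, hb⟩⟩

theorem ehrling_inequality {i : X →L[𝕜] B} (hi : IsCompactOperator i)
    {j : B →L[𝕜] Y} (hj : Function.Injective j) {η : ℝ≥0} (hη : 0 < η) :
    ∃ C : ℝ≥0, ∀ x, ‖i x‖ ≤ η * ‖x‖ + C * ‖j (i x)‖ := by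
  obtain ⟨c, hc⟩ := NormedField.exists_one_lt_norm 𝕜
  have : 0 < ‖c‖ := one_pos.trans hc
  obtain ⟨K, hK, hiK⟩ :=
    hi.image_closedBall_subset_compact (𝕜₁ := 𝕜) (f := (i : X →ₗ[𝕜] B)) 1
  obtain ⟨m, hm, hjm⟩ := exists_pos_forall_le_norm_of_isCompact hK hj
    (show 0 < η * (1 / ‖c‖) by positivity)
  refine ⟨‖i‖₊ / m.toNNReal, fun x => ?_⟩
  rw [NNReal.coe_div, coe_nnnorm, Real.coe_toNNReal m hm.le]
  rcases eq_or_ne x 0 with rfl | hx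
  · simp
  -- The norm of `𝕜` need not take every positive value, so `x` is only rescaled into a shell.
  obtain ⟨d, hd, hdx_lt, hdx_ge, -⟩ := rescale_to_shell hc one_pos hx
  have shell : ‖i (d • x)‖ ≤ η * ‖d • x‖ + ‖i‖ / m * ‖j (i (d • x))‖ := by
    rcases lt_or_ge ‖i (d • x)‖ (η * (1 / ‖c‖)) with hlt | hge
    · calc ‖i (d • x)‖ ≤ η * ‖d • x‖ := hlt.le.trans (by gcongr)
        _ ≤ η * ‖d • x‖ + ‖i‖ / m * ‖j (i (d • x))‖ := le_add_of_nonneg_right (by positivity)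
    · have hjm : m ≤ ‖j (i (d • x))‖ := hjm _ (hiK ⟨d • x, by simpa using hdx_lt.le, rfl⟩) hge
      calc ‖i (d • x)‖ ≤ ‖i‖ / m * m := by
            rw [div_mul_cancel₀ _ hm.ne']
            exact i.le_of_opNorm_le_of_le le_rfl hdx_lt.le |>.trans_eq (mul_one _)
        _ ≤ ‖i‖ / m * ‖j (i (d • x))‖ := by gcongr
        _ ≤ η * ‖d • x‖ + ‖i‖ / m * ‖j (i (d • x))‖ := le_add_of_nonneg_left (by positivity)
  refine le_of_mul_le_mul_left ?_ (norm_pos_iff.2 hd)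
  simp only [map_smul, norm_smul] at shell
  linarith

end Ehrling

section Partition

variable {α ι E : Type*} [MeasurableSpace α] {μ : Measure α} [NormedAddCommGroup E]

/-- A partition, up to a null set, of a measure space into measurable cells of positive measure. -/
structure IsCellPartition (μ : Measure α) (A : ι → Set α) : Prop where
  measurableSet : ∀ k, MeasurableSet (A k)
  pairwise_disjoint : Pairwise (Function.onFun Disjoint A)
  ae_mem : ∀ᵐ x ∂μ, x ∈ ⋃ k, A k
  measure_ne_zero : ∀ k, μ (A k) ≠ 0

theorem IsCellPartition.sum_setLIntegral [Fintype ι] {A : ι → Set α} (hA : IsCellPartition μ A)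
    (g : α → ℝ≥0∞) : ∑ k, ∫⁻ x in A k, g x ∂μ = ∫⁻ x, g x ∂μ := by
  rw [← tsum_fintype (L := .unconditional ι),
    ← lintegral_iUnion hA.measurableSet hA.pairwise_disjoint,
    Measure.restrict_eq_self_of_ae_mem hA.ae_mem]

/-- The mean over `s ∈ A` of `∫ t in A, ‖u t - u s‖ ^ r`: up to a constant factor, the `r`-th power
of the `L^r` distance from `u` to the constants on `A`. -/
noncomputable def meanOscillation (r : ℝ) (u : α → E) (μ : Measure α) (A : Set α) : ℝ≥0∞ :=
  ⨍⁻ s in A, ∫⁻ t in A, ‖u t - u s‖ₑ ^ r ∂μ ∂μ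

theorem meanOscillation_congr_ae {r : ℝ} {u v : α → E} {A : Set α} (h : u =ᵐ[μ] v) :
    meanOscillation r u μ A = meanOscillation r v μ A := by
  have hA := ae_restrict_of_ae (s := A) h
  refine laverage_congr ?_
  filter_upwards [hA] with s hs
  refine lintegral_congr_ae ?_
  filter_upwards [hA] with t ht
  rw [hs, ht]

theorem exists_mem_setLIntegral_add_le [IsFiniteMeasure μ] {A : Set α} (hA : μ A ≠ 0) (r : ℝ)
    {u : α → E} (hu : AEStronglyMeasurable u μ) {ψ : α → ℝ≥0∞} (hψ : AEMeasurable ψ μ) :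
    ∃ s ∈ A, ∫⁻ t in A, ‖u t - u s‖ₑ ^ r ∂μ + μ A * ψ s ≤
      meanOscillation r u μ A + ∫⁻ t in A, ψ t ∂μ := by
  have hu' := hu.restrict (s := A)
  have hosc : AEMeasurable (fun s => ∫⁻ t in A, ‖u t - u s‖ₑ ^ r ∂μ) (μ.restrict A) :=
    ((hu'.comp_snd.sub hu'.comp_fst).enorm.pow_const r).lintegral_prod_right'
  obtain ⟨s, hsA, hs⟩ := exists_le_setLAverage hA (measure_ne_top μ A)
    (hosc.add (hψ.restrict.const_mul (μ A)))
  refine ⟨s, hsA, hs.trans_eq ?_⟩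
  simp only [Pi.add_apply]
  rw [meanOscillation, setLAverage_eq, setLAverage_eq, lintegral_add_left' hosc,
    lintegral_const_mul'' _ hψ.restrict, ENNReal.add_div, mul_comm (μ A),
    ENNReal.mul_div_cancel_right hA (measure_ne_top μ A)]

theorem IsCellPartition.exists_sample_points [Fintype ι] [IsFiniteMeasure μ] {A : ι → Set α}
    (hA : IsCellPartition μ A) (r : ℝ) {u : α → E} (hu : AEStronglyMeasurable u μ)
    {ψ : α → ℝ≥0∞} (hψ : AEMeasurable ψ μ) :
    ∃ s : ι → α, ∑ k, (∫⁻ t in A k, ‖u t - u (s k)‖ₑ ^ r ∂μ + μ (A k) * ψ (s k)) ≤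
      ∑ k, meanOscillation r u μ (A k) + ∫⁻ t, ψ t ∂μ := by
  choose s _ hs using fun k =>
    exists_mem_setLIntegral_add_le (hA.measure_ne_zero k) r hu hψ
  refine ⟨s, (Finset.sum_le_sum fun k _ => hs k).trans_eq ?_⟩
  rw [Finset.sum_add_distrib, hA.sum_setLIntegral]

theorem continuous_indicatorConstLp {p : ℝ≥0∞} [Fact (1 ≤ p)] {s : Set α} (hs : MeasurableSet s)
    (hμs : μ s ≠ ⊤) : Continuous fun c : E => indicatorConstLp p hs hμs c := by
  have hK (a b : E) : dist (indicatorConstLp p hs hμs a) (indicatorConstLp p hs hμs b) ≤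
      μ.real s ^ (1 / p.toReal) * dist a b := by
    rw [dist_eq_norm, dist_eq_norm, indicatorConstLp_sub, mul_comm]
    exact norm_indicatorConstLp_le
  exact (LipschitzWith.of_dist_le' hK).continuous

/-- The element of `L^p` taking the value `b k` on the cell `A k`. -/
noncomputable def stepLp [Fintype ι] [IsFiniteMeasure μ] (p : ℝ≥0∞) {A : ι → Set α}
    (hA : IsCellPartition μ A) (b : ι → E) : Lp E p μ :=
  ∑ k, indicatorConstLp p (hA.measurableSet k) (measure_ne_top μ (A k)) (b k)

variable [Fintype ι] [IsFiniteMeasure μ] {p : ℝ≥0∞} {A : ι → Set α}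

theorem continuous_stepLp [Fact (1 ≤ p)] (hA : IsCellPartition μ A) :
    Continuous fun b : ι → E => stepLp p hA b :=
  continuous_finsetSum _ fun k _ =>
    (continuous_indicatorConstLp (hA.measurableSet k) (measure_ne_top μ (A k))).comp
      (continuous_apply k)

theorem stepLp_ae_eq (hA : IsCellPartition μ A) (b : ι → E) (k : ι) :
    ∀ᵐ x ∂μ.restrict (A k), stepLp p hA b x = b k := by
  have hind : ∀ᵐ x ∂μ, ∀ l, indicatorConstLp p (hA.measurableSet l) (measure_ne_top μ (A l)) (b l) x
      = (A l).indicator (fun _ => b l) x := ae_all_iff.2 fun l => indicatorConstLp_coeFn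
  rw [ae_restrict_iff' (hA.measurableSet k)]
  filter_upwards [hind, Lp.coeFn_fun_finsetSum Finset.univ fun l =>
    indicatorConstLp p (hA.measurableSet l) (measure_ne_top μ (A l)) (b l)] with x hx hsum hxk
  rw [stepLp, hsum, Finset.sum_eq_single k _ (by simp), hx, Set.indicator_of_mem hxk]
  intro l _ hlk
  rw [hx, Set.indicator_of_notMem]
  exact (hA.pairwise_disjoint hlk).notMem_of_mem_right hxk

theorem edist_stepLp_rpow (hp0 : p ≠ 0) (hp : p ≠ ⊤) (hA : IsCellPartition μ A) (b : ι → E)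
    {g : Lp E p μ} {u : α → E} (hgu : g =ᵐ[μ] u) :
    edist g (stepLp p hA b) ^ p.toReal = ∑ k, ∫⁻ x in A k, ‖u x - b k‖ₑ ^ p.toReal ∂μ := by
  rw [Lp.edist_def, eLpNorm_eq_lintegral_rpow_enorm_toReal hp0 hp, one_div,
    ENNReal.rpow_inv_rpow (ENNReal.toReal_pos hp0 hp).ne', ← hA.sum_setLIntegral]
  refine Finset.sum_congr rfl fun k _ => lintegral_congr_ae ?_
  filter_upwards [ae_restrict_of_ae hgu, stepLp_ae_eq (p := p) hA b k] with x hgx hbx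
  rw [Pi.sub_apply, hgx, hbx]

end Partition

section Criterion

variable {X B α : Type*} [NormedAddCommGroup X] [NormedAddCommGroup B]
  [MeasurableSpace α] {μ : Measure α} [IsFiniteMeasure μ] {p : ℝ≥0∞}

-- A small multiple of `‖f‖ ^ p` is added to the quantity averaged over each cell, so that `f` is
-- also bounded, uniformly over `F`, at the sample points selected there.
theorem IsCellPartition.exists_bounded_sample_points {ι : Type*} [Fintype ι] {A : ι → Set α}
    (hA : IsCellPartition μ A) {i : X → B} (hi : Continuous i) (hp0 : p ≠ 0) (hp : p ≠ ⊤)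
    {F : Set (α → X)} (hmeas : ∀ f ∈ F, AEStronglyMeasurable f μ)
    {C : ℝ≥0∞} (hC : C ≠ ⊤) (hbdd : ∀ f ∈ F, eLpNorm f p μ ≤ C)
    {ε : ℝ≥0∞} (hε0 : ε ≠ 0) (hε : ε ≠ ⊤)
    (hosc : ∀ f ∈ F, ∑ k, meanOscillation p.toReal (fun x => i (f x)) μ (A k) ≤ ε / 2) :
    ∃ R : ι → ℝ, ∀ f ∈ F, ∃ s : ι → α, (∀ k, ‖f (s k)‖ ≤ R k) ∧
      ∑ k, ∫⁻ t in A k, ‖i (f t) - i (f (s k))‖ₑ ^ p.toReal ∂μ ≤ ε := by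
  have hr : 0 < p.toReal := ENNReal.toReal_pos hp0 hp
  obtain ⟨c, hc, hcC⟩ := ENNReal.exists_nnreal_pos_mul_lt
    (ENNReal.rpow_ne_top_of_nonneg hr.le hC) (ENNReal.half_pos hε0).ne'
  have hc0 : (c : ℝ≥0∞) ≠ 0 := by exact_mod_cast hc.ne'
  refine ⟨fun k => ((ε / μ (A k) / c) ^ p.toReal⁻¹).toReal, fun f hf => ?_⟩
  have hnorm : AEMeasurable (fun t => ‖f t‖ₑ ^ p.toReal) μ := (hmeas f hf).enorm.pow_const _
  have hfC : ∫⁻ t, c * ‖f t‖ₑ ^ p.toReal ∂μ ≤ ε / 2 := by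
    have := hbdd f hf
    rw [eLpNorm_eq_lintegral_rpow_enorm_toReal hp0 hp, one_div, ENNReal.rpow_inv_le_iff hr] at this
    rw [lintegral_const_mul'' _ hnorm]
    grw [this, hcC]
  obtain ⟨s, hs⟩ := hA.exists_sample_points p.toReal
    (hi.comp_aestronglyMeasurable (hmeas f hf)) (hnorm.const_mul c)
  replace hs := hs.trans ((add_le_add (hosc f hf) hfC).trans_eq (ENNReal.add_halves ε))
  refine ⟨s, fun k => ?_, (Finset.sum_le_sum fun k _ => le_self_add).trans hs⟩
  have hk : μ (A k) * (c * ‖f (s k)‖ₑ ^ p.toReal) ≤ ε :=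
    le_add_self.trans ((Finset.single_le_sum
      (f := fun k => ∫⁻ t in A k, ‖i (f t) - i (f (s k))‖ₑ ^ p.toReal ∂μ +
        μ (A k) * (c * ‖f (s k)‖ₑ ^ p.toReal))
      (fun _ _ => zero_le) (Finset.mem_univ k)).trans hs)
  have hμk := hA.measure_ne_zero k
  rw [← toReal_enorm]
  refine ENNReal.toReal_mono (ENNReal.rpow_ne_top_of_nonneg (inv_nonneg.2 hr.le)
    (ENNReal.div_ne_top (ENNReal.div_ne_top hε hμk) hc0)) ((ENNReal.le_rpow_inv_iff hr).2 ?_)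
  rw [ENNReal.le_div_iff_mul_le (.inl hc0) (.inl coe_ne_top),
    ENNReal.le_div_iff_mul_le (.inl hμk) (.inl (measure_ne_top μ _))]
  rwa [mul_comm _ (c : ℝ≥0∞), mul_comm]

theorem totallyBounded_of_meanOscillation_le {𝕜 : Type*} [NontriviallyNormedField 𝕜]
    [NormedSpace 𝕜 X] [NormedSpace 𝕜 B] [Fact (1 ≤ p)] (hp : p ≠ ⊤)
    {i : X →L[𝕜] B} (hi : IsCompactOperator i)
    {F : Set (α → X)} (hmeas : ∀ f ∈ F, AEStronglyMeasurable f μ)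
    (hbdd : ∃ C : ℝ≥0∞, C ≠ ⊤ ∧ ∀ f ∈ F, eLpNorm f p μ ≤ C)
    (hosc : ∀ ε : ℝ≥0∞, ε ≠ 0 → ∃ (n : ℕ) (A : Fin n → Set α), IsCellPartition μ A ∧
      ∀ f ∈ F, ∑ k, meanOscillation p.toReal (fun x => i (f x)) μ (A k) ≤ ε) :
    TotallyBounded {g : Lp B p μ | ∃ f ∈ F, g =ᵐ[μ] fun x => i (f x)} := by
  have hp0 : p ≠ 0 := (one_pos.trans_le (Fact.out : 1 ≤ p)).ne'
  have hr : 0 < p.toReal := ENNReal.toReal_pos hp0 hp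
  obtain ⟨C, hC, hbdd⟩ := hbdd
  refine totallyBounded_of_forall_exists_totallyBounded fun ε hε0 hε => ?_
  have hεr : ε ^ p.toReal ≠ 0 := (ENNReal.rpow_pos (pos_iff_ne_zero.2 hε0) hε).ne'
  obtain ⟨n, A, hA, hAF⟩ := hosc (ε ^ p.toReal / 2) (ENNReal.half_pos hεr).ne'
  obtain ⟨R, hR⟩ := hA.exists_bounded_sample_points i.continuous hp0 hp hmeas hC hbdd hεr
    (ENNReal.rpow_ne_top_of_nonneg hr.le hε) hAF
  choose K hK hiK using fun k =>
    hi.image_closedBall_subset_compact (𝕜₁ := 𝕜) (f := (i : X →ₗ[𝕜] B)) (R k)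
  refine ⟨_, ((isCompact_univ_pi hK).image (continuous_stepLp (p := p) hA)).totallyBounded, ?_⟩
  rintro g ⟨f, hf, hgf⟩
  obtain ⟨s, hsR, hs⟩ := hR f hf
  refine ⟨_, ⟨fun k => i (f (s k)), fun k _ => hiK k ⟨f (s k), by simpa using hsR k, rfl⟩, rfl⟩, ?_⟩
  rw [← ENNReal.rpow_le_rpow_iff hr, edist_stepLp_rpow hp0 hp hA _ hgf]
  exact hs

end Criterion

section Grid

open Set

theorem lintegral_lintegral_le_two_mul_of_symm {α : Type*} [MeasurableSpace α]
    [TopologicalSpace α] [SecondCountableTopology α] [OpensMeasurableSpace α] [LinearOrder α]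
    [OrderClosedTopology α] {μ : Measure α} [SFinite μ] {G : α → α → ℝ≥0∞}
    (hG : Measurable G.uncurry) (hsymm : ∀ s t, G s t = G t s) :
    ∫⁻ s, ∫⁻ t, G s t ∂μ ∂μ ≤ 2 * ∫⁻ s, ∫⁻ t in Ici s, G s t ∂μ ∂μ := by
  set H : α → α → ℝ≥0∞ := fun s t => (Ici s).indicator (G s) t
  have hH : Measurable H.uncurry := hG.indicator (measurableSet_le measurable_fst measurable_snd)
  have hGH (s t : α) : G s t ≤ H s t + H t s := by
    rcases le_total s t with h | h
    · simp [H, h]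
    · simp [H, h, hsymm s t]
  calc ∫⁻ s, ∫⁻ t, G s t ∂μ ∂μ ≤ ∫⁻ s, ∫⁻ t, H s t + H t s ∂μ ∂μ :=
        lintegral_mono fun s => lintegral_mono fun t => hGH s t
    _ = ∫⁻ s, ∫⁻ t, H s t ∂μ ∂μ + ∫⁻ s, ∫⁻ t, H t s ∂μ ∂μ := by
        rw [← lintegral_add_left (f := fun s => ∫⁻ t, H s t ∂μ) hH.lintegral_prod_right']
        exact lintegral_congr fun s => lintegral_add_left hH.of_uncurry_left _
    _ = 2 * ∫⁻ s, ∫⁻ t, H s t ∂μ ∂μ := by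
        rw [← lintegral_lintegral_swap hH.aemeasurable, two_mul]
    _ = 2 * ∫⁻ s, ∫⁻ t in Ici s, G s t ∂μ ∂μ := by
        simp only [H, lintegral_indicator measurableSet_Ici]

theorem setLIntegral_Icc_eq_setLIntegral_Ioo_add (g : ℝ → ℝ≥0∞) (s b : ℝ) :
    ∫⁻ t in Icc s b, g t = ∫⁻ τ in Ioo 0 (b - s), g (s + τ) := by
  rw [← (measurePreserving_add_left volume s).setLIntegral_comp_preimage_emb
    (measurableEmbedding_addLeft s), preimage_const_add_Icc, sub_self, restrict_Ioo_eq_restrict_Icc]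

theorem setLIntegral_setLIntegral_Ioc_le_of_symm {G : ℝ → ℝ → ℝ≥0∞} (hG : Measurable G.uncurry)
    (hsymm : ∀ s t, G s t = G t s) {a b T : ℝ} (hbT : b ≤ T) :
    ∫⁻ s in Ioc a b, ∫⁻ t in Ioc a b, G s t ≤
      2 * ∫⁻ s in Ioc a b, ∫⁻ τ in Ioo 0 (b - a), (Iic T).indicator (G s) (s + τ) := by
  refine (lintegral_lintegral_le_two_mul_of_symm hG hsymm).trans ?_
  gcongr 2 * ?_
  refine setLIntegral_mono' measurableSet_Ioc fun s hs => ?_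
  calc ∫⁻ t in Ici s, G s t ∂volume.restrict (Ioc a b) ≤ ∫⁻ t in Icc s b, G s t := by
        rw [Measure.restrict_restrict measurableSet_Ici]
        exact lintegral_mono_set fun t ht => ⟨ht.1, ht.2.2⟩
    _ = ∫⁻ τ in Ioo 0 (b - s), G s (s + τ) := setLIntegral_Icc_eq_setLIntegral_Ioo_add _ s b
    _ = ∫⁻ τ in Ioo 0 (b - s), (Iic T).indicator (G s) (s + τ) :=
        setLIntegral_congr_fun measurableSet_Ioo fun τ hτ =>
          (indicator_of_mem (mem_Iic.2 (by linarith [hτ.2])) (G s)).symm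
    _ ≤ ∫⁻ τ in Ioo 0 (b - a), (Iic T).indicator (G s) (s + τ) :=
        lintegral_mono_set (Ioo_subset_Ioo_right (by linarith [hs.1]))

theorem setLIntegral_setLIntegral_indicator_Iic_add {G : ℝ → ℝ → ℝ≥0∞}
    (hG : Measurable G.uncurry) (T h : ℝ) :
    ∫⁻ s in Ioc 0 T, ∫⁻ τ in Ioo 0 h, (Iic T).indicator (G s) (s + τ) =
      ∫⁻ τ in Ioo 0 h, ∫⁻ s in Ioo 0 (T - τ), G s (s + τ) := by
  have hmeas : Measurable fun q : ℝ × ℝ => (Iic T).indicator (G q.1) (q.1 + q.2) :=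
    (hG.comp (measurable_fst.prodMk (measurable_fst.add measurable_snd))).indicator
      (measurableSet_le (measurable_fst.add measurable_snd) measurable_const)
  rw [lintegral_lintegral_swap hmeas.aemeasurable]
  refine setLIntegral_congr_fun measurableSet_Ioo fun τ hτ => ?_
  have hind : (fun s => (Iic T).indicator (G s) (s + τ)) =
      (Iic (T - τ)).indicator fun s => G s (s + τ) := by
    ext s
    simp only [indicator, mem_Iic, le_sub_iff_add_le]
  have hIoc : Iic (T - τ) ∩ Ioc 0 T = Ioc 0 (T - τ) := by
    rw [inter_comm, Ioc_inter_Iic, inf_eq_right.2 (by linarith [hτ.1])]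
  rw [hind, lintegral_indicator measurableSet_Iic, Measure.restrict_restrict measurableSet_Iic,
    hIoc, restrict_Ioo_eq_restrict_Ioc]

/-- The `k`-th interval of the uniform grid of mesh `h`, half-open so that the grid is a genuine
partition of `(0, n * h]`. -/
def gridCell (h : ℝ) (k : ℕ) : Set ℝ :=
  Ioc (k * h) ((k + 1) * h)

theorem gridCell_subset {h : ℝ} (hh : 0 ≤ h) {k n : ℕ} (hk : k < n) :
    gridCell h k ⊆ Ioc 0 (n * h) := by
  have hkn : (k + 1 : ℝ) ≤ n := by exact_mod_cast hk
  exact Ioc_subset_Ioc (by positivity) (by gcongr)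

theorem restrict_Ioo_restrict_gridCell {h : ℝ} (hh : 0 ≤ h) {k n : ℕ} (hk : k < n) :
    (volume.restrict (Ioo 0 (n * h))).restrict (gridCell h k) = volume.restrict (gridCell h k) := by
  rw [restrict_Ioo_eq_restrict_Ioc, Measure.restrict_restrict_of_subset (gridCell_subset hh hk)]

theorem restrict_Ioo_apply_gridCell {h : ℝ} (hh : 0 ≤ h) {k n : ℕ} (hk : k < n) :
    volume.restrict (Ioo 0 (n * h)) (gridCell h k) = ENNReal.ofReal h := by
  rw [← Measure.restrict_apply_self, restrict_Ioo_restrict_gridCell hh hk,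
    Measure.restrict_apply_self, gridCell, Real.volume_Ioc, add_one_mul, add_sub_cancel_left]

theorem isCellPartition_gridCell {h : ℝ} (hh : 0 < h) (n : ℕ) :
    IsCellPartition (volume.restrict (Ioo 0 (n * h))) fun k : Fin n => gridCell h k := by
  have hmono : Monotone fun k : ℕ => (k : ℝ) * h := fun k l hkl => by
    dsimp only
    gcongr
  have hcell (k : ℕ) : gridCell h k = Ioc (k * h) ((Order.succ k : ℕ) * h) := by
    simp [gridCell]
  refine ⟨fun k => measurableSet_Ioc, fun k l hkl => ?_, ?_, fun k => ?_⟩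
  · simp only [Function.onFun, hcell]
    exact hmono.pairwise_disjoint_on_Ioc_succ (Fin.val_injective.ne hkl)
  · rw [restrict_Ioo_eq_restrict_Ioc]
    filter_upwards [ae_restrict_mem measurableSet_Ioc] with x hx
    rw [← zero_mul h, ← Nat.cast_zero, ← hmono.biUnion_Ico_Ioc_map_succ] at hx
    obtain ⟨k, hk, hxk⟩ := mem_iUnion₂.1 hx
    exact mem_iUnion.2 ⟨⟨k, hk.2⟩, (hcell k).symm ▸ hxk⟩
  · rw [restrict_Ioo_apply_gridCell hh.le k.2]
    simpa using hh

theorem sum_setLIntegral_setLIntegral_gridCell_le {G : ℝ → ℝ → ℝ≥0∞} (hG : Measurable G.uncurry)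
    (hsymm : ∀ s t, G s t = G t s) {h : ℝ} (hh : 0 < h) {n : ℕ} {W : ℝ≥0∞}
    (hW : ∀ τ ∈ Ioo 0 h, ∫⁻ s in Ioo 0 (n * h - τ), G s (s + τ) ≤ W) :
    ∑ k : Fin n, ∫⁻ s in gridCell h k, ∫⁻ t in gridCell h k, G s t ≤
      2 * (ENNReal.ofReal h * W) := by
  have hcell (k : Fin n) : ∫⁻ s in gridCell h k, ∫⁻ t in gridCell h k, G s t ≤
      2 * ∫⁻ s in gridCell h k, (∫⁻ τ in Ioo 0 h, (Iic (n * h)).indicator (G s) (s + τ))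
        ∂volume.restrict (Ioo 0 (n * h)) := by
    have hkn : ((k : ℕ) + 1 : ℝ) ≤ n := by exact_mod_cast k.2
    have hlen : ((k : ℕ) + 1 : ℝ) * h - (k : ℕ) * h = h := by ring
    rw [restrict_Ioo_restrict_gridCell hh.le k.2]
    simpa only [gridCell, hlen] using setLIntegral_setLIntegral_Ioc_le_of_symm hG hsymm
      (a := (k : ℕ) * h) (b := ((k : ℕ) + 1) * h) (T := n * h) (by gcongr)
  refine (Finset.sum_le_sum fun k _ => hcell k).trans ?_
  rw [← Finset.mul_sum, (isCellPartition_gridCell hh n).sum_setLIntegral,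
    restrict_Ioo_eq_restrict_Ioc, setLIntegral_setLIntegral_indicator_Iic_add hG]
  gcongr 2 * ?_
  calc ∫⁻ τ in Ioo 0 h, ∫⁻ s in Ioo 0 (n * h - τ), G s (s + τ) ≤ ∫⁻ _ in Ioo 0 h, W :=
        setLIntegral_mono' measurableSet_Ioo hW
    _ = ENNReal.ofReal h * W := by simp [mul_comm]

end Grid

section Translation

open Set

variable {E : Type*} [NormedAddCommGroup E]

/-- The `L^p` distance on `(0, T - h)` between `u` and its translate `u (· + h)`. -/
noncomputable def translationError (p : ℝ≥0∞) (T h : ℝ) (u : ℝ → E) : ℝ≥0∞ :=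
  eLpNorm (fun t => u (t + h) - u t) p (volume.restrict (Ioo 0 (T - h)))

theorem measurePreserving_add_right_restrict_Ioo (a b h : ℝ) :
    MeasurePreserving (· + h) (volume.restrict (Ioo a (b - h)))
      (volume.restrict (Ioo (a + h) b)) := by
  simpa using (measurePreserving_add_right volume h).restrict_preimage
    (measurableSet_Ioo (a := a + h) (b := b))

theorem restrict_Ioo_add_left_le {h : ℝ} (hh : 0 ≤ h) (a b : ℝ) :
    volume.restrict (Ioo (a + h) b) ≤ volume.restrict (Ioo a b) :=
  Measure.restrict_mono_set _ (Ioo_subset_Ioo_left (le_add_of_nonneg_right hh))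

theorem restrict_Ioo_sub_right_le {h : ℝ} (hh : 0 ≤ h) (a b : ℝ) :
    volume.restrict (Ioo a (b - h)) ≤ volume.restrict (Ioo a b) :=
  Measure.restrict_mono_set _ (Ioo_subset_Ioo_right (sub_le_self b hh))

theorem translationError_congr_ae {p : ℝ≥0∞} {T h : ℝ} (hh : 0 ≤ h) {u v : ℝ → E}
    (huv : u =ᵐ[volume.restrict (Ioo 0 T)] v) :
    translationError p T h u = translationError p T h v :=
  eLpNorm_congr_ae <|
    ((measurePreserving_add_right_restrict_Ioo 0 T h).quasiMeasurePreserving.ae_eq_comp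
      (ae_mono (restrict_Ioo_add_left_le hh 0 T) huv)).sub
        (ae_mono (restrict_Ioo_sub_right_le hh 0 T) huv)

theorem aestronglyMeasurable_comp_add_right {T h : ℝ} (hh : 0 ≤ h) {u : ℝ → E}
    (hu : AEStronglyMeasurable u (volume.restrict (Ioo 0 T))) :
    AEStronglyMeasurable (fun t => u (t + h)) (volume.restrict (Ioo 0 (T - h))) :=
  (hu.mono_measure (restrict_Ioo_add_left_le hh 0 T)).comp_measurePreserving
    (measurePreserving_add_right_restrict_Ioo 0 T h)

theorem translationError_le_two_mul_eLpNorm {p : ℝ≥0∞} (hp : 1 ≤ p) {T h : ℝ} (hh : 0 ≤ h)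
    {u : ℝ → E} (hu : AEStronglyMeasurable u (volume.restrict (Ioo 0 T))) :
    translationError p T h u ≤ 2 * eLpNorm u p (volume.restrict (Ioo 0 T)) :=
  calc translationError p T h u
      ≤ eLpNorm (fun t => u (t + h)) p (volume.restrict (Ioo 0 (T - h))) +
          eLpNorm u p (volume.restrict (Ioo 0 (T - h))) :=
        eLpNorm_sub_le (aestronglyMeasurable_comp_add_right hh hu)
          (hu.mono_measure (restrict_Ioo_sub_right_le hh 0 T)) hp
    _ = eLpNorm u p (volume.restrict (Ioo (0 + h) T)) +
          eLpNorm u p (volume.restrict (Ioo 0 (T - h))) := by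
        rw [← eLpNorm_comp_measurePreserving (hu.mono_measure (restrict_Ioo_add_left_le hh 0 T))
          (measurePreserving_add_right_restrict_Ioo 0 T h), Function.comp_def]
    _ ≤ 2 * eLpNorm u p (volume.restrict (Ioo 0 T)) := by
        grw [restrict_Ioo_add_left_le hh 0 T, restrict_Ioo_sub_right_le hh 0 T, two_mul]

end Translation

section GridOscillation

open Set

theorem sum_meanOscillation_gridCell_le {E : Type*} [NormedAddCommGroup E] {p : ℝ≥0∞}
    (hp0 : p ≠ 0) (hp : p ≠ ⊤) {h : ℝ} (hh : 0 < h) {n : ℕ} {u : ℝ → E}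
    (hu : AEStronglyMeasurable u (volume.restrict (Ioo 0 (n * h)))) {W : ℝ≥0∞}
    (hW : ∀ τ ∈ Ioo 0 h, translationError p (n * h) τ u ≤ W) :
    ∑ k : Fin n, meanOscillation p.toReal u (volume.restrict (Ioo 0 (n * h))) (gridCell h k) ≤
      2 * W ^ p.toReal := by
  set v := hu.mk u
  have hv : StronglyMeasurable v := hu.stronglyMeasurable_mk
  have hG : Measurable (fun s t => ‖v t - v s‖ₑ ^ p.toReal).uncurry :=
    (hv.comp_snd.sub hv.comp_fst).enorm.pow_const _
  have hvW : ∀ τ ∈ Ioo 0 h,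
      ∫⁻ s in Ioo 0 (n * h - τ), ‖v (s + τ) - v s‖ₑ ^ p.toReal ≤ W ^ p.toReal := fun τ hτ => by
    have := hW τ hτ
    rwa [translationError_congr_ae hτ.1.le hu.ae_eq_mk, translationError,
      eLpNorm_eq_lintegral_rpow_enorm_toReal hp0 hp, one_div,
      ENNReal.rpow_inv_le_iff (ENNReal.toReal_pos hp0 hp)] at this
  have hosc (k : Fin n) :
      meanOscillation p.toReal u (volume.restrict (Ioo 0 (n * h))) (gridCell h k) =
      (∫⁻ s in gridCell h k, ∫⁻ t in gridCell h k, ‖v t - v s‖ₑ ^ p.toReal) / ENNReal.ofReal h := by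
    rw [meanOscillation_congr_ae hu.ae_eq_mk, meanOscillation, setLAverage_eq,
      restrict_Ioo_restrict_gridCell hh.le k.2, restrict_Ioo_apply_gridCell hh.le k.2]
  simp only [hosc, div_eq_mul_inv, ← Finset.sum_mul]
  rw [← div_eq_mul_inv]
  refine ENNReal.div_le_of_le_mul ?_
  calc ∑ k : Fin n, ∫⁻ s in gridCell h k, ∫⁻ t in gridCell h k, ‖v t - v s‖ₑ ^ p.toReal
    _ ≤ 2 * (ENNReal.ofReal h * W ^ p.toReal) :=
      sum_setLIntegral_setLIntegral_gridCell_le hG (fun s t => by rw [enorm_sub_rev]) hh hvW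
    _ = 2 * W ^ p.toReal * ENNReal.ofReal h := by ring

theorem exists_nat_pos_mul_eq_lt {T : ℝ} (hT : 0 < T) {δ : ℝ} (hδ : 0 < δ) :
    ∃ (n : ℕ) (h : ℝ), 0 < h ∧ h < δ ∧ n * h = T := by
  obtain ⟨m, hm⟩ := exists_nat_one_div_lt (div_pos hδ hT)
  refine ⟨m + 1, T / (m + 1), by positivity, ?_, by push_cast; field_simp⟩
  calc T / (m + 1) = T * (1 / (m + 1)) := by ring
    _ < T * (δ / T) := by gcongr
    _ = δ := mul_div_cancel₀ δ hT.ne'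

theorem exists_isCellPartition_sum_meanOscillation_le {E : Type*} [NormedAddCommGroup E]
    {p : ℝ≥0∞} (hp0 : p ≠ 0) (hp : p ≠ ⊤) {T : ℝ} (hT : 0 < T) {𝒰 : Set (ℝ → E)}
    (hmeas : ∀ u ∈ 𝒰, AEStronglyMeasurable u (volume.restrict (Ioo 0 T)))
    (htrans : ∀ ε : ℝ≥0∞, ε ≠ 0 →
      ∃ δ > 0, ∀ h ∈ Ioo 0 δ, ∀ u ∈ 𝒰, translationError p T h u ≤ ε) {ε : ℝ≥0∞} (hε : ε ≠ 0) :
    ∃ (n : ℕ) (A : Fin n → Set ℝ), IsCellPartition (volume.restrict (Ioo 0 T)) A ∧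
      ∀ u ∈ 𝒰, ∑ k, meanOscillation p.toReal u (volume.restrict (Ioo 0 T)) (A k) ≤ ε := by
  have hr : 0 < p.toReal := ENNReal.toReal_pos hp0 hp
  obtain ⟨δ, hδ, hsmall⟩ := htrans ((ε / 2) ^ p.toReal⁻¹) (by simp [hε, hr.le])
  obtain ⟨n, h, hh, hhδ, rfl⟩ := exists_nat_pos_mul_eq_lt hT hδ
  refine ⟨n, fun k => gridCell h k, isCellPartition_gridCell hh n, fun u hu => ?_⟩
  refine (sum_meanOscillation_gridCell_le hp0 hp hh (hmeas u hu)
    fun τ hτ => hsmall τ ⟨hτ.1, hτ.2.trans hhδ⟩ u hu).trans_eq ?_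
  rw [ENNReal.rpow_inv_rpow hr.ne', ENNReal.mul_div_cancel two_ne_zero (ofNat_ne_top (n := 2))]

end GridOscillation

section EhrlingTranslation

open Set
open scoped NNReal

variable {𝕜 X B Y : Type*} [NontriviallyNormedField 𝕜]
  [NormedAddCommGroup X] [NormedSpace 𝕜 X] [NormedAddCommGroup B] [NormedSpace 𝕜 B]
  [NormedAddCommGroup Y] [NormedSpace 𝕜 Y]

theorem eLpNorm_le_add_of_norm_le_add {α E G H : Type*} [MeasurableSpace α] {μ : Measure α}
    [NormedAddCommGroup E] [NormedAddCommGroup G] [NormedAddCommGroup H]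
    {u : α → E} {v : α → G} {w : α → H} (hv : AEStronglyMeasurable v μ)
    (hw : AEStronglyMeasurable w μ) {p : ℝ≥0∞} (hp : 1 ≤ p) {a b : ℝ≥0}
    (h : ∀ x, ‖u x‖ ≤ a * ‖v x‖ + b * ‖w x‖) :
    eLpNorm u p μ ≤ a * eLpNorm v p μ + b * eLpNorm w p μ :=
  calc eLpNorm u p μ ≤ eLpNorm (fun x => a * ‖v x‖ + b * ‖w x‖) p μ := eLpNorm_mono_real h
    _ ≤ eLpNorm (fun x => a * ‖v x‖) p μ + eLpNorm (fun x => b * ‖w x‖) p μ :=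
      eLpNorm_add_le (hv.norm.const_mul _) (hw.norm.const_mul _) hp
    _ ≤ a * eLpNorm v p μ + b * eLpNorm w p μ := by
      gcongr <;> refine eLpNorm_le_nnreal_smul_eLpNorm_of_ae_le_mul (.of_forall fun x => ?_) p <;>
        rw [← NNReal.coe_le_coe] <;> simp

theorem translationError_le_of_norm_le {i : X →L[𝕜] B} {j : B →L[𝕜] Y} {η C : ℝ≥0}
    (hij : ∀ x, ‖i x‖ ≤ η * ‖x‖ + C * ‖j (i x)‖) {p : ℝ≥0∞} (hp : 1 ≤ p) {T h : ℝ} (hh : 0 ≤ h)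
    {f : ℝ → X} (hf : AEStronglyMeasurable f (volume.restrict (Ioo 0 T))) :
    translationError p T h (fun t => i (f t)) ≤
      η * translationError p T h f + C * translationError p T h (fun t => j (i (f t))) := by
  have hdiff : AEStronglyMeasurable (fun t => f (t + h) - f t) (volume.restrict (Ioo 0 (T - h))) :=
    (aestronglyMeasurable_comp_add_right hh hf).sub
      (hf.mono_measure (restrict_Ioo_sub_right_le hh 0 T))
  have := eLpNorm_le_add_of_norm_le_add hdiff
    ((j.comp i).continuous.comp_aestronglyMeasurable hdiff) hp fun t => hij (f (t + h) - f t)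
  simpa only [translationError, map_sub, ContinuousLinearMap.comp_apply] using this

theorem exists_forall_translationError_le {i : X →L[𝕜] B} (hi : IsCompactOperator i)
    {j : B →L[𝕜] Y} (hj : Function.Injective j) {p : ℝ≥0∞} (hp : 1 ≤ p) {T : ℝ} {F : Set (ℝ → X)}
    (hmeas : ∀ f ∈ F, AEStronglyMeasurable f (volume.restrict (Ioo 0 T)))
    (hbdd : ∃ M : ℝ≥0∞, M ≠ ⊤ ∧ ∀ f ∈ F, eLpNorm f p (volume.restrict (Ioo 0 T)) ≤ M)
    (htrans : ∀ ε : ℝ, 0 < ε → ∃ δ : ℝ, 0 < δ ∧ ∀ h : ℝ, 0 < h → h < δ →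
      ∀ f ∈ F, translationError p T h (fun t => j (i (f t))) ≤ ENNReal.ofReal ε)
    {ε : ℝ≥0∞} (hε : ε ≠ 0) :
    ∃ δ > 0, ∀ h ∈ Ioo 0 δ, ∀ f ∈ F, translationError p T h (fun t => i (f t)) ≤ ε := by
  obtain ⟨M, hM, hbdd⟩ := hbdd
  have hε2 : ε / 2 ≠ 0 := (ENNReal.half_pos hε).ne'
  obtain ⟨η, hη, hηM⟩ :=
    ENNReal.exists_nnreal_pos_mul_lt (mul_ne_top (ofNat_ne_top (n := 2)) hM) hε2
  obtain ⟨C, hC⟩ := ehrling_inequality hi hj hη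
  obtain ⟨w, hw, hwC⟩ := ENNReal.exists_nnreal_pos_mul_lt (coe_ne_top (r := C)) hε2
  obtain ⟨δ, hδ, hsmall⟩ := htrans w hw
  refine ⟨δ, hδ, fun h hh f hf => ?_⟩
  calc translationError p T h (fun t => i (f t))
      ≤ η * translationError p T h f + C * translationError p T h (fun t => j (i (f t))) :=
        translationError_le_of_norm_le hC hp hh.1.le (hmeas f hf)
    _ ≤ η * (2 * M) + C * w := by
        grw [translationError_le_two_mul_eLpNorm hp hh.1.le (hmeas f hf), hbdd f hf,
          hsmall h hh.1 hh.2 f hf, ofReal_coe_nnreal]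
    _ ≤ ε / 2 + ε / 2 := by
        rw [mul_comm (C : ℝ≥0∞)]
        exact add_le_add hηM.le hwC.le
    _ = ε := ENNReal.add_halves ε

end EhrlingTranslation

theorem aubin_lions_simon_general {𝕜 X B Y : Type*} [NontriviallyNormedField 𝕜]
    [NormedAddCommGroup X] [NormedSpace 𝕜 X] [NormedAddCommGroup B] [NormedSpace 𝕜 B]
    [NormedAddCommGroup Y] [NormedSpace 𝕜 Y]
    (i : X →L[𝕜] B) (hi : IsCompactOperator i)
    (j : B →L[𝕜] Y) (hj : Function.Injective j)
    (p : ℝ≥0∞) [hp1 : Fact (1 ≤ p)] (hp2 : p ≠ ⊤)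
    (T : ℝ) (hT : 0 < T)
    (F : Set (ℝ → X))
    (hmeas : ∀ f ∈ F, AEStronglyMeasurable f (volume.restrict (Set.Ioo 0 T)))
    (hbdd : ∃ C : ℝ≥0∞, C ≠ ⊤ ∧ ∀ f ∈ F,
      eLpNorm f p (volume.restrict (Set.Ioo 0 T)) ≤ C)
    (htrans : ∀ ε : ℝ, 0 < ε → ∃ δ : ℝ, 0 < δ ∧ ∀ h : ℝ, 0 < h → h < δ →
      ∀ f ∈ F, eLpNorm (fun t => j (i (f (t + h))) - j (i (f t))) p
        (volume.restrict (Set.Ioo 0 (T - h))) ≤ ENNReal.ofReal ε) :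
    TotallyBounded {g : Lp B p (volume.restrict (Set.Ioo 0 T)) |
      ∃ f ∈ F, (g : ℝ → B) =ᵐ[volume.restrict (Set.Ioo 0 T)] fun t => i (f t)} := by
  have hp0 : p ≠ 0 := (one_pos.trans_le hp1.out).ne'
  refine totallyBounded_of_meanOscillation_le hp2 hi hmeas hbdd fun ε hε => ?_
  have hmeas_i : ∀ u ∈ (fun f t => i (f t)) '' F,
      AEStronglyMeasurable u (volume.restrict (Set.Ioo 0 T)) :=
    Set.forall_mem_image.2 fun f hf => i.continuous.comp_aestronglyMeasurable (hmeas f hf)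
  simpa only [Set.forall_mem_image] using
    exists_isCellPartition_sum_meanOscillation_le hp0 hp2 hT hmeas_i (fun ε hε => by
      simpa only [Set.forall_mem_image] using
        exists_forall_translationError_le hi hj hp1.out hmeas hbdd htrans hε) hε

/-- Aubin–Lions–Simon compactness theorem (finite exponent case). -/
theorem aubin_lions_simon
    {X B Y : Type*} [NormedAddCommGroup X] [NormedSpace ℝ X] [CompleteSpace X]
    [NormedAddCommGroup B] [NormedSpace ℝ B] [CompleteSpace B]
    [NormedAddCommGroup Y] [NormedSpace ℝ Y] [CompleteSpace Y]
    (i : X →L[ℝ] B) (hi : IsCompactOperator i)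
    (j : B →L[ℝ] Y) (hj : Function.Injective j)
    (p : ℝ≥0∞) [hp1 : Fact (1 ≤ p)] (hp2 : p ≠ ⊤)
    (T : ℝ) (hT : 0 < T)
    (F : Set (ℝ → X))
    (hmeas : ∀ f ∈ F, AEStronglyMeasurable f (volume.restrict (Set.Ioo 0 T)))
    (hbdd : ∃ C : ℝ≥0∞, C ≠ ⊤ ∧ ∀ f ∈ F,
      eLpNorm f p (volume.restrict (Set.Ioo 0 T)) ≤ C)
    (htrans : ∀ ε : ℝ, 0 < ε → ∃ δ : ℝ, 0 < δ ∧ ∀ h : ℝ, 0 < h → h < δ →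
      ∀ f ∈ F, eLpNorm (fun t => j (i (f (t + h))) - j (i (f t))) p
        (volume.restrict (Set.Ioo 0 (T - h))) ≤ ENNReal.ofReal ε) :
    IsCompact (closure {g : Lp B p (volume.restrict (Set.Ioo 0 T)) |
      ∃ f ∈ F, (g : ℝ → B) =ᵐ[volume.restrict (Set.Ioo 0 T)] fun t => i (f t)}) :=
  (aubin_lions_simon_general i hi j hj p hp2 T hT F hmeas hbdd htrans).closure.isCompact_of_isClosed
    isClosed_closure
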